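/- Let N ⊆ M_m be a unital *-subalgebra and ρ ∈ M_m a density. Then D(ρ‖N) = D(ρ‖E(ρ)) = H(E(ρ)) − H(ρ), and E(ρ) is the unique density σ ∈ N achieving D(ρ‖σ) = D(ρ‖N). -/

import Mathlib

open scoped ENNReal Classical ComplexOrder
open Matrix

noncomputable section

namespace GJL

variable {n : Type*} [Fintype n] [DecidableEq n]

/-- `Mat n` is the matrix *-algebra with rows and columns indexed by `n`. -/
abbrev Mat (n : Type*) [Fintype n] [DecidableEq n] := Matrix n n ℂ

/-- A density matrix: positive semidefinite with trace one. -/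
def IsDensity (ρ : Mat n) : Prop := ρ.PosSemidef ∧ ρ.trace = 1

/-- The real part of the (matrix) trace. -/
def traceR (A : Mat n) : ℝ := (A.trace).re

/-- Real matrix powers via the continuous functional calculus.  For positive
semidefinite matrices and negative exponents this is the generalized inverse
power on the support, since `(0 : ℝ) ^ r = 0` for `r ≠ 0`. -/
def mpow (A : Mat n) (r : ℝ) : Mat n := cfc (fun x : ℝ => x ^ r) A

/-- Matrix logarithm on the support (`Real.log 0 = 0`). -/
def mlog (A : Mat n) : Mat n := cfc Real.log A

/-- Schatten `p`-norm `(Tr ((x* x)^(p/2)))^(1/p)`. -/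
def snorm (p : ℝ) (x : Mat n) : ℝ := (traceR (mpow (xᴴ * x) (p/2))) ^ (1/p)

/-- Operator norm `‖x‖_∞`. -/
def opNorm (x : Mat n) : ℝ := ‖(Matrix.toEuclideanCLM (𝕜 := ℂ) x : EuclideanSpace ℂ n →L[ℂ] EuclideanSpace ℂ n)‖

/-- The support projection of `ρ` is dominated by that of `σ` (for positive
semidefinite matrices: `ker σ ⊆ ker ρ`). -/
def suppLe (ρ σ : Mat n) : Prop := ∀ v, σ.mulVec v = 0 → ρ.mulVec v = 0

/-- `e` is the support projection of `ρ`. -/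
def IsSupportProj (ρ e : Mat n) : Prop :=
  e.IsHermitian ∧ e * e = e ∧ ∀ v, e.mulVec v = 0 ↔ ρ.mulVec v = 0

/-- `D_∞(ρ‖σ) = log min {λ ≥ 0 | ρ ≤ λ σ}`, `⊤` if no such `λ` exists. -/
def Dinf (ρ σ : Mat n) : EReal :=
  if ∃ c : ℝ, 0 ≤ c ∧ (c • σ - ρ).PosSemidef then
    ((Real.log (sInf {c : ℝ | 0 ≤ c ∧ (c • σ - ρ).PosSemidef}) : ℝ) : EReal)
  else ⊤

/-- Umegaki relative entropy `D(ρ‖σ) = Tr(ρ log ρ - ρ log σ)`, `⊤` if the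
support condition fails. -/
def DU (ρ σ : Mat n) : EReal :=
  if suppLe ρ σ then ((traceR (ρ * mlog ρ - ρ * mlog σ) : ℝ) : EReal) else ⊤

/-- The sandwiched matrix `σ^{(1-p)/(2p)} ρ σ^{(1-p)/(2p)}`; note that for
`p > 1` the exponent `(1-p)/(2p)` equals `-1/(2p')` with `1/p + 1/p' = 1`. -/
def sandwich (p : ℝ) (ρ σ : Mat n) : Mat n :=
  mpow σ ((1 - p)/(2*p)) * ρ * mpow σ ((1 - p)/(2*p))

/-- The sandwiched Rényi relative entropy `D_p(ρ‖σ)` for `p ∈ [1/2, ∞]`: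
for `p ∈ (1,∞)` it is `p' log ‖σ^{-1/(2p')} ρ σ^{-1/(2p')}‖_p
= (p-1)⁻¹ log Tr ((σ^{-1/(2p')} ρ σ^{-1/(2p')})^p)` when the support of `ρ` is
dominated by that of `σ` and `⊤` otherwise; for `p ∈ [1/2, 1)` it is
`(p-1)⁻¹ log Tr ((σ^{(1-p)/(2p)} ρ σ^{(1-p)/(2p)})^p)` (`⊤` when the trace
vanishes, i.e. when the honest value is `+∞`); `D_1` is the Umegaki relative
entropy and `D_∞` the max-relative entropy. -/
def Dp (p : ℝ≥0∞) (ρ σ : Mat n) : EReal :=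
  if p = ⊤ then Dinf ρ σ
  else if p = 1 then DU ρ σ
  else if 1 < p.toReal ∧ ¬ suppLe ρ σ then ⊤
  else if traceR (mpow (sandwich p.toReal ρ σ) p.toReal) = 0 then ⊤
  else (((p.toReal - 1)⁻¹ * Real.log (traceR (mpow (sandwich p.toReal ρ σ) p.toReal)) : ℝ) : EReal)

/-- `D_p(ρ‖S) = inf { D_p(ρ‖σ) | σ a density in S }`. -/
def DpSet (p : ℝ≥0∞) (ρ : Mat n) (S : Set (Mat n)) : EReal :=
  ⨅ σ ∈ {σ ∈ S | IsDensity σ}, Dp p ρ σ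

/-- `D_p(A‖S) = sup { D_p(ρ‖S) | ρ a density in A }`. -/
def DpRel (p : ℝ≥0∞) (A S : Set (Mat n)) : EReal :=
  ⨆ ρ ∈ {ρ ∈ A | IsDensity ρ}, DpSet p ρ S

open scoped Kronecker in
/-- The algebraic tensor product `N₁ ⊗ N₂ ⊆ M_{n₁} ⊗ M_{n₂} = M_{n₁ × n₂}`,
realized as the linear span of Kronecker products. -/
def tensorSpan {n₁ n₂ : Type*} [Fintype n₁] [DecidableEq n₁] [Fintype n₂] [DecidableEq n₂]
    (N₁ : Set (Mat n₁)) (N₂ : Set (Mat n₂)) : Set (Mat (n₁ × n₂)) :=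
  ↑(Submodule.span ℂ {z : Mat (n₁ × n₂) | ∃ x ∈ N₁, ∃ y ∈ N₂, z = x ⊗ₖ y})

/-- `D_{p,cb}(M‖N) = sup_k D_p(M_k ⊗ M ‖ M_k ⊗ N)`. -/
def DpCb (p : ℝ≥0∞) (N : Set (Mat n)) : EReal :=
  ⨆ k : ℕ, DpRel p Set.univ (tensorSpan (Set.univ : Set (Mat (Fin k))) N)

/-- `E` is the trace preserving conditional expectation onto `N`, i.e. the
orthogonal projection onto `N` with respect to the Hilbert–Schmidt inner
product `⟨x,y⟩ = Tr(x* y)`. -/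
def IsCondExp (N : Set (Mat n)) (E : Mat n →ₗ[ℂ] Mat n) : Prop :=
  (∀ x, E x ∈ N) ∧ (∀ x ∈ N, E x = x) ∧
    ∀ x y, y ∈ N → ((E x)ᴴ * y).trace = (xᴴ * y).trace

/-- The Pimsner–Popa index constant
`λ(M:N) = max {c ≥ 0 | c x ≤ E(x) for all x ≥ 0}`. -/
def ppIndex (E : Mat n →ₗ[ℂ] Mat n) : ℝ :=
  sSup {c : ℝ | 0 ≤ c ∧ ∀ x : Mat n, x.PosSemidef → (E x - c • x).PosSemidef}

/-- von Neumann entropy `H(ρ) = -Tr(ρ log ρ)`. -/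
def vnEntropy (ρ : Mat n) : ℝ := - traceR (ρ * mlog ρ)

/-- The amplification `id_{M_k} ⊗ Φ` acting on `M_k ⊗ M_n = M_{k × n}`,
applying `Φ` blockwise. -/
def ampFun (k : Type*) [Fintype k] [DecidableEq k] (Φ : Mat n →ₗ[ℂ] Mat n)
    (X : Mat (k × n)) : Mat (k × n) :=
  Matrix.of fun a b => Φ (Matrix.of fun s t => X (a.1, s) (b.1, t)) a.2 b.2

/-- Complete positivity: all amplifications `id_{M_k} ⊗ Φ` preserve positive
semidefiniteness. -/
def IsCP (Φ : Mat n →ₗ[ℂ] Mat n) : Prop :=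
  ∀ (k : ℕ) (X : Mat (Fin k × n)), X.PosSemidef → (ampFun (Fin k) Φ X).PosSemidef

/-- Completely positive and trace preserving. -/
def IsCPTP (Φ : Mat n →ₗ[ℂ] Mat n) : Prop :=
  IsCP Φ ∧ ∀ x : Mat n, (Φ x).trace = x.trace

lemma contS (A : Mat n) (f : ℝ → ℝ) : ContinuousOn f (spectrum ℝ A) :=
  A.finite_real_spectrum.continuousOn f

lemma cfc_mul' (A : Mat n) (f g : ℝ → ℝ) :
    cfc f A * cfc g A = cfc (fun x => f x * g x) A :=
  (cfc_mul f g A (contS A f) (contS A g)).symm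

lemma cfc_mem (N : StarSubalgebra ℂ (Mat n)) {A : Mat n} (hA : A.IsHermitian) (hN : A ∈ N)
    (f : ℝ → ℝ) : cfc f A ∈ N := by
  have hA' : IsSelfAdjoint A := hA
  set s := A.finite_real_spectrum.toFinset
  set q : Polynomial ℝ := Lagrange.interpolate s id f
  have h1 : cfc f A = cfc q.eval A := by
    apply cfc_congr
    intro x hx
    have := Lagrange.eval_interpolate_at_node (s := s) (v := id) (i := x) f
      (Set.injOn_id _) (by simpa [s] using hx)
    exact this.symm
  rw [h1, cfc_polynomial q A hA', Polynomial.aeval_eq_sum_range]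
  refine sum_mem fun i _ => ?_
  have : q.coeff i • A ^ i = ((q.coeff i : ℝ) : ℂ) • A ^ i := by ext; simp
  rw [this]
  exact N.smul_mem (pow_mem hN i) _

/-- overlap weights -/
def wt {A B : Mat n} (hA : A.IsHermitian) (hB : B.IsHermitian) (i j : n) : ℝ :=
  Complex.normSq ((star (hA.eigenvectorUnitary : Mat n) * (hB.eigenvectorUnitary : Mat n)) i j)

lemma wt_nonneg {A B : Mat n} (hA : A.IsHermitian) (hB : B.IsHermitian) (i j : n) :
    0 ≤ wt hA hB i j := Complex.normSq_nonneg _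

lemma tr_pair {A B : Mat n} (hA : A.IsHermitian) (hB : B.IsHermitian) (f g : ℝ → ℝ) :
    traceR (cfc f A * cfc g B) =
      ∑ i, ∑ j, f (hA.eigenvalues i) * g (hB.eigenvalues j) * wt hA hB i j := by
  rw [hA.cfc_eq, hB.cfc_eq, Matrix.IsHermitian.cfc, Matrix.IsHermitian.cfc,
    Unitary.conjStarAlgAut_apply, Unitary.conjStarAlgAut_apply]
  unfold traceR wt
  set U := (hA.eigenvectorUnitary : Mat n)
  set V := (hB.eigenvectorUnitary : Mat n)
  set W := star U * V with hW
  have hW' : star V * U = star W := by simp [hW]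
  set D1 : Mat n := diagonal (RCLike.ofReal ∘ f ∘ hA.eigenvalues)
  set D2 : Mat n := diagonal (RCLike.ofReal ∘ g ∘ hB.eigenvalues)
  have : (U * D1 * star U * (V * D2 * star V)).trace = (D1 * W * (D2 * star W)).trace := by
    rw [← hW', hW]
    calc _ = (U * (D1 * star U * (V * D2 * star V))).trace := by simp only [mul_assoc]
      _ = _ := by rw [Matrix.trace_mul_comm]; simp only [mul_assoc]
  rw [this, Matrix.trace, Complex.re_sum]
  refine Finset.sum_congr rfl fun i _ => ?_
  rw [Matrix.diag_apply, Matrix.mul_apply, Complex.re_sum]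
  refine Finset.sum_congr rfl fun j _ => ?_
  simp only [D1, D2, Matrix.diagonal_mul, Matrix.star_apply, Function.comp_apply]
  have h2 : ∀ (a b : ℝ) (w : ℂ), ((a : ℂ) * w * ((b : ℂ) * star w)) =
      ((a * b * Complex.normSq w : ℝ) : ℂ) := by
    intro a b w
    push_cast
    rw [← Complex.mul_conj]
    simp only [Complex.star_def]
    ring
  exact (congrArg Complex.re (h2 _ _ _)).trans (Complex.ofReal_re _)

lemma scalar_ineq {a b : ℝ} (ha : 0 ≤ a) (hb : 0 < b) :
    a + b - 2 * (√a * √b) ≤ a * Real.log a - a * Real.log b - a + b := by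
  rcases ha.eq_or_lt with rfl | ha
  · simp
  have hx : 0 < √a := Real.sqrt_pos.2 ha
  have hy : 0 < √b := Real.sqrt_pos.2 hb
  have h1 := Real.log_le_sub_one_of_pos (div_pos hy hx)
  rw [Real.log_div hy.ne' hx.ne', Real.log_sqrt ha.le, Real.log_sqrt hb.le] at h1
  have h2 := mul_le_mul_of_nonneg_left h1 ha.le
  have h3 : a * (√b / √a) = √a * √b := by
    have := Real.mul_self_sqrt ha.le
    field_simp
    nlinarith
  nlinarith

def ind0 (x : ℝ) : ℝ := if x = 0 then 1 else 0

lemma klein {A B : Mat n} (hA : A.PosSemidef) (hB : B.PosSemidef)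
    (h0 : traceR (A * cfc ind0 B) = 0) (htr : traceR A = traceR B) :
    traceR ((cfc Real.sqrt A - cfc Real.sqrt B)ᴴ * (cfc Real.sqrt A - cfc Real.sqrt B)) ≤
      traceR (A * mlog A) - traceR (A * mlog B) := by
  have hA' := hA.isHermitian
  have hB' := hB.isHermitian
  have sA : IsSelfAdjoint A := hA'
  have sB : IsSelfAdjoint B := hB'
  have idA : cfc (fun x : ℝ => x) A = A := cfc_id' ℝ A
  have idB : cfc (fun x : ℝ => x) B = B := cfc_id' ℝ B
  have oneA : cfc (fun _ : ℝ => (1:ℝ)) A = 1 := cfc_const_one ℝ A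
  have oneB : cfc (fun _ : ℝ => (1:ℝ)) B = 1 := cfc_const_one ℝ B
  have eA := fun i => hA.eigenvalues_nonneg i
  have eB := fun i => hB.eigenvalues_nonneg i
  have z : ∀ i j, hB'.eigenvalues j = 0 → hA'.eigenvalues i * wt hA' hB' i j = 0 := by
    intro i j hj
    have h := tr_pair hA' hB' (fun x => x) ind0
    rw [idA, h0] at h
    have nn : ∀ i j, 0 ≤ hA'.eigenvalues i * ind0 (hB'.eigenvalues j) * wt hA' hB' i j := by
      intro i j
      refine mul_nonneg (mul_nonneg (eA i) ?_) (wt_nonneg _ _ _ _)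
      unfold ind0; split_ifs <;> norm_num
    have h1 := (Finset.sum_eq_zero_iff_of_nonneg
      (fun i _ => Finset.sum_nonneg fun j _ => nn i j)).1 h.symm i (Finset.mem_univ _)
    have h2 := (Finset.sum_eq_zero_iff_of_nonneg (fun j _ => nn i j)).1 h1 j (Finset.mem_univ _)
    simpa [ind0, hj] using h2
  have rhs : traceR (A * mlog A) - traceR (A * mlog B) - traceR A + traceR B =
      ∑ i, ∑ j, (hA'.eigenvalues i * Real.log (hA'.eigenvalues i)
        - hA'.eigenvalues i * Real.log (hB'.eigenvalues j)
        - hA'.eigenvalues i + hB'.eigenvalues j) * wt hA' hB' i j := by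
    have t1 := tr_pair hA' hB' (fun x => x * Real.log x) (fun _ => 1)
    have t2 := tr_pair hA' hB' (fun x => x) Real.log
    have t3 := tr_pair hA' hB' (fun x => x) (fun _ => 1)
    have t4 := tr_pair hA' hB' (fun _ => 1) (fun x => x)
    rw [← cfc_mul' A (fun x => x) Real.log, idA, oneB, mul_one] at t1
    rw [idA] at t2
    rw [idA, oneB, mul_one] at t3
    rw [oneA, idB, one_mul] at t4
    unfold mlog
    rw [t1, t2, t3, t4]
    simp only [← Finset.sum_sub_distrib, ← Finset.sum_add_distrib]
    refine Finset.sum_congr rfl fun i _ => Finset.sum_congr rfl fun j _ => ?_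
    ring
  have lhs : traceR ((cfc Real.sqrt A - cfc Real.sqrt B)ᴴ * (cfc Real.sqrt A - cfc Real.sqrt B)) =
      ∑ i, ∑ j, (hA'.eigenvalues i + hB'.eigenvalues j
        - 2 * (√(hA'.eigenvalues i) * √(hB'.eigenvalues j))) * wt hA' hB' i j := by
    have t2 := tr_pair hA' hB' Real.sqrt Real.sqrt
    have t3 := tr_pair hA' hB' (fun x => √x * √x) (fun _ => 1)
    have t4 := tr_pair hA' hB' (fun _ => 1) (fun x => √x * √x)
    rw [← cfc_mul' A Real.sqrt Real.sqrt, oneB, mul_one] at t3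
    rw [← cfc_mul' B Real.sqrt Real.sqrt, oneA, one_mul] at t4
    have c1 : (cfc Real.sqrt A)ᴴ = cfc Real.sqrt A := (cfc_predicate Real.sqrt A : IsSelfAdjoint _)
    have c2 : (cfc Real.sqrt B)ᴴ = cfc Real.sqrt B := (cfc_predicate Real.sqrt B : IsSelfAdjoint _)
    have : traceR ((cfc Real.sqrt A - cfc Real.sqrt B)ᴴ * (cfc Real.sqrt A - cfc Real.sqrt B)) =
        traceR (cfc Real.sqrt A * cfc Real.sqrt A) + traceR (cfc Real.sqrt B * cfc Real.sqrt B)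
        - 2 * traceR (cfc Real.sqrt A * cfc Real.sqrt B) := by
      rw [Matrix.conjTranspose_sub, c1, c2]
      simp only [traceR, sub_mul, mul_sub, Matrix.trace_sub, Complex.sub_re]
      rw [Matrix.trace_mul_comm (cfc Real.sqrt B) (cfc Real.sqrt A)]
      ring
    rw [this, t2, t3, t4]
    simp only [Finset.mul_sum, ← Finset.sum_sub_distrib, ← Finset.sum_add_distrib]
    refine Finset.sum_congr rfl fun i _ => Finset.sum_congr rfl fun j _ => ?_
    rw [Real.mul_self_sqrt (eA i), Real.mul_self_sqrt (eB j)]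
    ring
  have : traceR (A * mlog A) - traceR (A * mlog B) =
    traceR (A * mlog A) - traceR (A * mlog B) - traceR A + traceR B := by rw [htr]; ring
  rw [this, rhs, lhs]
  refine Finset.sum_le_sum fun i _ => Finset.sum_le_sum fun j _ => ?_
  rcases (eB j).eq_or_lt with hj | hj
  · have hz := z i j hj.symm
    rw [← hj]
    simp only [Real.sqrt_zero, Real.log_zero]
    have e1 : (hA'.eigenvalues i + 0 - 2 * (√(hA'.eigenvalues i) * 0)) * wt hA' hB' i j = 0 := by
      linear_combination hz
    have e2 : (hA'.eigenvalues i * Real.log (hA'.eigenvalues i) - hA'.eigenvalues i * 0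
      - hA'.eigenvalues i + 0) * wt hA' hB' i j = 0 := by
      linear_combination (Real.log (hA'.eigenvalues i) - 1) * hz
    rw [e1, e2]
  · exact mul_le_mul_of_nonneg_right (scalar_ineq (eA i) hj) (wt_nonneg _ _ _ _)

lemma traceR_sq_nonneg (X : Mat n) : 0 ≤ traceR (Xᴴ * X) := by
  have := (Matrix.posSemidef_conjTranspose_mul_self X).trace_nonneg
  exact (Complex.nonneg_iff.1 this).1

lemma eq_zero_of_traceR_sq {X : Mat n} (h : traceR (Xᴴ * X) ≤ 0) : X = 0 := by
  have h1 := (Matrix.posSemidef_conjTranspose_mul_self X).trace_nonneg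
  have h2 := Complex.nonneg_iff.1 h1
  apply Matrix.trace_conjTranspose_mul_self_eq_zero_iff.1
  apply Complex.ext
  · exact le_antisymm h h2.1
  · exact h2.2.symm

lemma sqrt_mul_self' {A : Mat n} (hA : A.PosSemidef) :
    cfc Real.sqrt A * cfc Real.sqrt A = A := by
  have sA : IsSelfAdjoint A := hA.isHermitian
  rw [cfc_mul']
  conv_rhs => rw [← cfc_id' ℝ A]
  apply cfc_congr
  intro x hx
  rw [hA.isHermitian.spectrum_real_eq_range_eigenvalues] at hx
  obtain ⟨i, rfl⟩ := hx
  exact Real.mul_self_sqrt (hA.eigenvalues_nonneg i)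

lemma klein_eq {A B : Mat n} (hA : A.PosSemidef) (hB : B.PosSemidef)
    (h0 : traceR (A * cfc ind0 B) = 0) (htr : traceR A = traceR B)
    (h : traceR (A * mlog A) - traceR (A * mlog B) ≤ 0) : A = B := by
  have h1 := eq_zero_of_traceR_sq ((klein hA hB h0 htr).trans h)
  rw [← sqrt_mul_self' hA, ← sqrt_mul_self' hB, sub_eq_zero.1 h1]

/-- the kernel projection annihilates -/
lemma mul_ind0 {B : Mat n} (hB : B.IsHermitian) : B * cfc ind0 B = 0 := by
  have sB : IsSelfAdjoint B := hB
  conv_lhs => rw [← cfc_id' ℝ B (ha := sB)]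
  rw [cfc_id' ℝ B]
  have h := cfc_mul' B (fun x => x) ind0
  rw [cfc_id' ℝ B] at h
  rw [h]
  have : (fun x : ℝ => x * ind0 x) = fun _ => 0 := by
    funext x; unfold ind0; split_ifs with hx <;> simp [hx]
  rw [this]
  simp

lemma ind0_eq {B : Mat n} (hB : B.IsHermitian) : cfc ind0 B + cfc (fun x : ℝ => x⁻¹) B * B = 1 := by
  have sB : IsSelfAdjoint B := hB
  have h := cfc_mul' B (fun x => x⁻¹) (fun x => x)
  rw [cfc_id' ℝ B] at h
  rw [h, ← cfc_add (a := B) _ _ (contS B _) (contS B _), ← cfc_const_one ℝ B]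
  congr 1
  funext x; unfold ind0; split_ifs with hx <;> simp [hx]

lemma mul_eq_zero_of_suppLe {A B : Mat n} (hB : B.IsHermitian) (h : suppLe A B) :
    A * cfc ind0 B = 0 := by
  apply Matrix.ext_of_mulVec_single
  intro i
  rw [← Matrix.mulVec_mulVec, Matrix.zero_mulVec]
  apply h
  rw [Matrix.mulVec_mulVec, mul_ind0 hB, Matrix.zero_mulVec]

lemma suppLe_of_trace {A B : Mat n} (hA : A.PosSemidef) (hB : B.IsHermitian)
    (h : traceR (A * cfc ind0 B) = 0) : suppLe A B := by
  have sB : IsSelfAdjoint B := hB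
  have sq := sqrt_mul_self' hA
  have c1 : (cfc Real.sqrt A)ᴴ = cfc Real.sqrt A := (cfc_predicate Real.sqrt A : IsSelfAdjoint _)
  have c2 : (cfc ind0 B)ᴴ = cfc ind0 B := (cfc_predicate ind0 B : IsSelfAdjoint _)
  have pp : cfc ind0 B * cfc ind0 B = cfc ind0 B := by
    rw [cfc_mul']; congr 1; funext x; unfold ind0; split_ifs <;> simp
  have hz : cfc Real.sqrt A * cfc ind0 B = 0 := by
    apply eq_zero_of_traceR_sq
    rw [Matrix.conjTranspose_mul, c1, c2]
    have : cfc ind0 B * cfc Real.sqrt A * (cfc Real.sqrt A * cfc ind0 B)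
        = cfc ind0 B * (A * cfc ind0 B) := by
      conv_rhs => rw [← sq]
      simp only [mul_assoc]
    rw [this, traceR, Matrix.trace_mul_comm, mul_assoc, pp]
    exact h.le
  intro v hv
  have hA0 : A * cfc ind0 B = 0 := by
    rw [← sq, mul_assoc, hz, mul_zero]
  have : v = cfc ind0 B *ᵥ v := by
    conv_lhs => rw [← Matrix.one_mulVec v, ← ind0_eq hB]
    rw [Matrix.add_mulVec, ← Matrix.mulVec_mulVec, hv, Matrix.mulVec_zero, add_zero]
  rw [this, Matrix.mulVec_mulVec, hA0, Matrix.zero_mulVec]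

lemma condExp_tr (N : StarSubalgebra ℂ (Mat n)) (E : Mat n →ₗ[ℂ] Mat n)
    (hE : IsCondExp (N : Set (Mat n)) E) (ρ : Mat n) (hρ : ρ.IsHermitian) :
    (E ρ).IsHermitian ∧ ∀ y ∈ N, traceR (E ρ * y) = traceR (ρ * y) := by
  obtain ⟨h1, h2, h3⟩ := hE
  have hm : E ρ ∈ N := h1 ρ
  have a1 : ∀ y ∈ N, ((E ρ)ᴴ * y).trace = (ρ * y).trace := by
    intro y hy
    rw [h3 ρ y hy, hρ.eq]
  have a2 : ∀ y ∈ N, (E ρ * y).trace = (ρ * y).trace := by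
    intro y hy
    have := a1 (yᴴ) (star_mem hy)
    have := congrArg star this
    rw [← Matrix.trace_conjTranspose, ← Matrix.trace_conjTranspose] at this
    simp only [Matrix.conjTranspose_mul, Matrix.conjTranspose_conjTranspose, hρ.eq] at this
    rw [Matrix.trace_mul_comm, this, Matrix.trace_mul_comm]
  refine ⟨?_, fun y hy => by rw [traceR, a2 y hy, traceR]⟩
  have hd : (E ρ)ᴴ - E ρ = 0 := by
    apply Matrix.trace_mul_conjTranspose_self_eq_zero_iff.1
    have hy : ((E ρ)ᴴ - E ρ)ᴴ ∈ N := star_mem (sub_mem (star_mem hm) hm)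
    rw [sub_mul, Matrix.trace_sub, a1 _ hy, a2 _ hy, sub_self]
  exact sub_eq_zero.1 hd

lemma condExp_psd (N : StarSubalgebra ℂ (Mat n)) (E : Mat n →ₗ[ℂ] Mat n)
    (hE : IsCondExp (N : Set (Mat n)) E) (ρ : Mat n) (hρ : ρ.PosSemidef) :
    (E ρ).PosSemidef := by
  obtain ⟨hH, ht⟩ := condExp_tr N E hE ρ hρ.isHermitian
  have hm : E ρ ∈ N := hE.1 ρ
  set e := E ρ
  have se : IsSelfAdjoint e := hH
  set g : ℝ → ℝ := fun x => max (-x) 0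
  set G := cfc g e
  set y := cfc (fun x => √(g x)) e
  have cG : Gᴴ = G := (cfc_predicate g e : IsSelfAdjoint _)
  have cy : yᴴ = y := (cfc_predicate (fun x => √(g x)) e : IsSelfAdjoint _)
  have yN : y ∈ N := cfc_mem N hH hm _
  have yy : y * y = G := by
    simp only [y, G]
    rw [cfc_mul']
    congr 1
    funext x
    exact Real.mul_self_sqrt (le_max_right _ _)
  have eG : e * G = -(G * G) := by
    have h := cfc_mul' e (fun x => x) g
    rw [cfc_id' ℝ e] at h
    simp only [G]
    rw [h, cfc_mul', ← cfc_neg]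
    congr 1
    funext x
    simp only [g]
    rcases le_total (-x) 0 with hx | hx
    · simp [max_eq_right hx]
    · simp [max_eq_left hx]
  have hG : G = 0 := by
    apply eq_zero_of_traceR_sq
    rw [cG]
    have h1 := ht (y * y) (mul_mem yN yN)
    have h2 : 0 ≤ traceR (ρ * (y * y)) := by
      have := (Complex.nonneg_iff.1 (hρ.conjTranspose_mul_mul_same y).trace_nonneg).1
      rw [cy, mul_assoc, Matrix.trace_mul_comm, mul_assoc] at this
      exact this
    rw [← h1, yy, eG] at h2
    simp only [traceR, Matrix.trace_neg, Complex.neg_re] at h2 ⊢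
    linarith
  rw [hH.posSemidef_iff_eigenvalues_nonneg]
  intro i
  have h0 : cfc g e = cfc (fun _ : ℝ => (0:ℝ)) e := by
    rw [show cfc g e = 0 from hG]; simp
  have := (cfc_eq_cfc_iff_eqOn (a := e) (f := g) (g := fun _ => 0) (ha := se)
    (hf := contS e g) (hg := contS e _)).1 h0 (hH.eigenvalues_mem_spectrum_real i)
  simp only [g] at this
  have h' := le_max_left (-hH.eigenvalues i) 0
  rw [this] at h'
  simpa using h'

/-- `D(ρ‖N) = D(ρ‖E(ρ)) = H(E(ρ)) - H(ρ)`, and `E(ρ)` is the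
unique density in `N` achieving the infimum `D(ρ‖N)`. -/
theorem statement3 {m : ℕ} (N : StarSubalgebra ℂ (Mat (Fin m)))
    (E : Mat (Fin m) →ₗ[ℂ] Mat (Fin m)) (hE : IsCondExp (N : Set (Mat (Fin m))) E)
    (ρ : Mat (Fin m)) (hρ : IsDensity ρ) :
    DpSet 1 ρ (N : Set (Mat (Fin m))) = Dp 1 ρ (E ρ) ∧
    Dp 1 ρ (E ρ) = ((vnEntropy (E ρ) - vnEntropy ρ : ℝ) : EReal) ∧
    ∀ σ : Mat (Fin m), σ ∈ (N : Set (Mat (Fin m))) → IsDensity σ →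
      Dp 1 ρ σ = DpSet 1 ρ (N : Set (Mat (Fin m))) → σ = E ρ := by
  obtain ⟨hH, ht⟩ := condExp_tr N E hE ρ hρ.1.isHermitian
  have hP := condExp_psd N E hE ρ hρ.1
  have hm : E ρ ∈ N := hE.1 ρ
  have hD : ∀ σ, Dp 1 ρ σ = DU ρ σ := fun σ => by simp [Dp]
  have htr : (E ρ).trace = 1 := by
    have := hE.2.2 ρ 1 N.one_mem
    rwa [mul_one, mul_one, hH.eq, hρ.1.isHermitian.eq, hρ.2] at this
  have hdens : IsDensity (E ρ) := ⟨hP, htr⟩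
  have hs : suppLe ρ (E ρ) := by
    apply suppLe_of_trace hρ.1 hH
    rw [← ht _ (cfc_mem N hH hm _), mul_ind0 hH]
    simp [traceR]
  have val : ∀ σ ∈ N, σ.IsHermitian → suppLe ρ σ →
      DU ρ σ = ((traceR (ρ * mlog ρ) - traceR (E ρ * mlog σ) : ℝ) : EReal) := by
    intro σ hσ hσH hs
    rw [DU, if_pos hs, ht (mlog σ) (cfc_mem N hσH hσ _)]
    simp [traceR, Matrix.trace_sub]
  have supp0 : ∀ σ ∈ N, σ.IsHermitian → suppLe ρ σ → traceR (E ρ * cfc ind0 σ) = 0 := by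
    intro σ hσ hσH hs
    rw [ht _ (cfc_mem N hσH hσ _), mul_eq_zero_of_suppLe hσH hs]
    simp [traceR]
  have trR : ∀ σ : Mat (Fin m), IsDensity σ → traceR (E ρ) = traceR σ := by
    intro σ hσ
    rw [traceR, traceR, htr, hσ.2]
  have hle : ∀ σ ∈ N, IsDensity σ → DU ρ (E ρ) ≤ DU ρ σ := by
    intro σ hσ hσd
    by_cases hsσ : suppLe ρ σ
    · rw [val σ hσ hσd.1.isHermitian hsσ, val _ hm hH hs, EReal.coe_le_coe_iff]
      have := klein hP hσd.1 (supp0 σ hσ hσd.1.isHermitian hsσ) (trR σ hσd)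
      have := traceR_sq_nonneg (cfc Real.sqrt (E ρ) - cfc Real.sqrt σ)
      linarith
    · rw [DU, DU, if_neg hsσ]
      exact le_top
  have hinf : DpSet 1 ρ (N : Set (Mat (Fin m))) = DU ρ (E ρ) := by
    unfold DpSet
    apply le_antisymm
    · rw [← hD]
      exact iInf₂_le (E ρ) ⟨hm, hdens⟩
    · refine le_iInf₂ fun σ hσ => ?_
      rw [hD]
      exact hle σ hσ.1 hσ.2
  refine ⟨by rw [hinf, hD], ?_, ?_⟩
  · rw [hD, val _ hm hH hs]
    congr 1
    unfold vnEntropy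
    ring
  · intro σ hσ hσd h
    rw [hinf, hD] at h
    by_cases hsσ : suppLe ρ σ
    · rw [val σ hσ hσd.1.isHermitian hsσ, val _ hm hH hs, EReal.coe_eq_coe_iff] at h
      exact (klein_eq hP hσd.1 (supp0 σ hσ hσd.1.isHermitian hsσ) (trR σ hσd) (by linarith)).symm
    · rw [val _ hm hH hs, DU, if_neg hsσ] at h
      exact absurd h.symm (EReal.coe_ne_top _)

end GJL
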